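/- arXiv:1807.04988 — 2 statements merged into one kernel-verified Lean document; each statement's English description precedes it below -/
import Mathlib

section
/- Let $z_{\max} > 0$ and $\alpha_2 > 0$. Let $(g_n)_{n \ge 0}$ be a sequence of functions $g_n : (0, z_{\max}] \to (0,1]$ such that each $g_n$ is monotone increasing and differentiable on $(0,z_{\max}]$, such that for every $z \in (0,z_{\max}]$ the sequence $(g_n(z))_{n\ge 0}$ converges, and such that for every $n \ge 1$ and every $z \in (0,z_{\max}]$ one has $g_n'(z) \ge \alpha_2 \, \frac{n}{\Sigma_n(z)}\, g_n(z)$. Then there exists $\tilde{z} \in [0, z_{\max}]$ such that: (i) for every $z \in (0,z_{\max}]$ with $z < \tilde{z}$ there exists a constant $\alpha_1 > 0$ (depending on $z$) with $g_n(z) \le \exp(-\alpha_1 n)$ for all $n \ge 0$; and (ii) for every $z \in (0,z_{\max}]$ with $z > \tilde{z}$, the limit $g(z) := \lim_{n \to \infty} g_n(z)$ satisfies $g(z) \ge \alpha_2 (z - \tilde{z})$. -/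
open Filter Real

/-!
Write `Σ_n(z) = ∑_{i<n} g_i(z)`. The threshold is the infimum of the points where
`limsup log Σ_n / log n ≥ 1`.

Below it, integrating `(log g_n)' ≥ α n / Σ_n` with `Σ_n` increasing in `z` gives
`g_n(x) ≤ exp (-α (y - x) n / Σ_n(y))` for `x ≤ y`. If `Σ_n(y) ≤ n ^ a` eventually for some `a < 1`,
then `g_n` is bounded by a stretched exponential at every point to the left of `y`, so `Σ_n` is
bounded there, and a second use of the same inequality yields exponential decay.

Above it, the sums `H_n = ∑_{1 ≤ i < n} g_i / i` satisfy `H_n' ≥ α ∑ g_i / Σ_i ≥ α log Σ_n`, up to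
a term of favourable sign, because `g_i / Σ_i ≥ log (Σ_{i+1} / Σ_i)` telescopes. Hence
`H_n(y) ≥ α (y - x) log Σ_n(x)`, which for infinitely many `n` is nearly `α (y - x) log n`, whereas
`H_n(y)` grows at most like `limsup g_n(y) * log n`.
-/

section RealFunctions

variable {f f' : ℝ → ℝ} {x y c : ℝ}

lemma mul_sub_le_sub_of_le_hasDerivWithinAt
    (hf : ∀ z ∈ Set.Icc x y, HasDerivWithinAt f (f' z) (Set.Icc x y) z)
    (hc : ∀ z ∈ Set.Icc x y, c ≤ f' z) (hxy : x ≤ y) : c * (y - x) ≤ f y - f x := by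
  have hmono : MonotoneOn (fun z => f z - c * z) (Set.Icc x y) := by
    have hder : ∀ z ∈ Set.Icc x y,
        HasDerivWithinAt (fun z => f z - c * z) (f' z - c * 1) (Set.Icc x y) z := fun z hz =>
      (hf z hz).sub ((hasDerivWithinAt_id z _).const_mul c)
    refine monotoneOn_of_hasDerivWithinAt_nonneg (convex_Icc x y)
      (fun z hz => (hder z hz).continuousWithinAt)
      (fun z hz => (hder z (interior_subset hz)).mono interior_subset) fun z hz => ?_
    simpa using hc z (interior_subset hz)
  have := hmono (Set.left_mem_Icc.2 hxy) (Set.right_mem_Icc.2 hxy) hxy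
  linarith

lemma le_exp_neg_mul_mul_of_mul_le_hasDerivWithinAt
    (hf : ∀ z ∈ Set.Icc x y, HasDerivWithinAt f (f' z) (Set.Icc x y) z)
    (hc : ∀ z ∈ Set.Icc x y, c * f z ≤ f' z) (hxy : x ≤ y) :
    f x ≤ exp (-(c * (y - x))) * f y := by
  have hmono : MonotoneOn (fun z => exp (-(c * (z - x))) * f z) (Set.Icc x y) := by
    have hder : ∀ z ∈ Set.Icc x y, HasDerivWithinAt (fun z => exp (-(c * (z - x))) * f z)
        (exp (-(c * (z - x))) * (-(c * 1)) * f z + exp (-(c * (z - x))) * f' z)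
        (Set.Icc x y) z := fun z hz =>
      ((((hasDerivWithinAt_id z _).sub_const x).const_mul c).neg.exp).mul (hf z hz)
    refine monotoneOn_of_hasDerivWithinAt_nonneg (convex_Icc x y)
      (fun z hz => (hder z hz).continuousWithinAt)
      (fun z hz => (hder z (interior_subset hz)).mono interior_subset) fun z hz => ?_
    calc 0 ≤ exp (-(c * (z - x))) * (f' z - c * f z) :=
          mul_nonneg (exp_pos _).le (sub_nonneg.2 (hc z (interior_subset hz)))
      _ = _ := by ring
  simpa using hmono (Set.left_mem_Icc.2 hxy) (Set.right_mem_Icc.2 hxy) hxy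

end RealFunctions

section RealSequences

lemma summable_exp_neg_mul_natCast_rpow {c p : ℝ} (hc : 0 < c) (hp : 0 < p) :
    Summable (fun n : ℕ => exp (-c * (n : ℝ) ^ p)) := by
  have hlittle : (fun n : ℕ => exp (-c * (n : ℝ) ^ p)) =o[atTop]
      fun n : ℕ => ((n : ℝ) ^ p) ^ (-2 / p) :=
    (isLittleO_exp_neg_mul_rpow_atTop hc (-2 / p)).comp_tendsto
      ((tendsto_rpow_atTop hp).comp tendsto_natCast_atTop_atTop)
  have hpow : ∀ n : ℕ, ((n : ℝ) ^ p) ^ (-2 / p) = (n : ℝ) ^ (-2 : ℝ) := fun n => by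
    rw [← rpow_mul n.cast_nonneg, mul_div_cancel₀ _ hp.ne']
  simp only [hpow] at hlittle
  exact summable_of_isBigO_nat (summable_nat_rpow.2 (by norm_num)) hlittle.isBigO

lemma log_add_le_log_add_div {a b : ℝ} (ha : 0 < a) (hab : 0 < a + b) :
    log (a + b) ≤ log a + b / a := by
  have h := log_le_sub_one_of_pos (div_pos hab ha)
  rw [log_div hab.ne' ha.ne', add_div, div_self ha.ne'] at h
  linarith

lemma log_sum_range_le_log_add_sum_div {u : ℕ → ℝ} (hu : ∀ n, 0 < u n) {n : ℕ} (hn : 1 ≤ n) :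
    log (∑ i ∈ Finset.range n, u i) ≤
      log (u 0) + ∑ i ∈ Finset.Ico 1 n, u i / ∑ j ∈ Finset.range i, u j := by
  induction n, hn using Nat.le_induction with
  | base => simp
  | succ n hn ih =>
    have hpos : ∀ m, 1 ≤ m → 0 < ∑ i ∈ Finset.range m, u i := fun m hm =>
      Finset.sum_pos (fun i _ => hu i) ⟨0, Finset.mem_range.2 hm⟩
    have hstep := log_add_le_log_add_div (hpos n hn) (add_pos (hpos n hn) (hu n))
    rw [Finset.sum_Ico_succ_top hn, Finset.sum_range_succ]
    linarith

lemma exists_eventually_sum_div_le_add_mul_log {u : ℕ → ℝ} {B : ℝ} (hB : 0 ≤ B)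
    (hu : ∀ᶠ n in atTop, u n ≤ B) :
    ∃ C : ℝ, ∀ᶠ n : ℕ in atTop, ∑ i ∈ Finset.Ico 1 n, u i / i ≤ C + B * log n := by
  obtain ⟨N, hN⟩ := eventually_atTop.1 (hu.and (eventually_ge_atTop 1))
  have hN1 : 1 ≤ N := (hN N le_rfl).2
  refine ⟨∑ i ∈ Finset.Ico 1 N, u i / i + B, eventually_atTop.2 ⟨N, fun n hn => ?_⟩⟩
  have htail : ∑ i ∈ Finset.Ico N n, u i / i ≤ B * (1 + log n) :=
    calc ∑ i ∈ Finset.Ico N n, u i / i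
        ≤ ∑ i ∈ Finset.Ico N n, B * (i : ℝ)⁻¹ := Finset.sum_le_sum fun i hi => by
          rw [div_eq_mul_inv]
          exact mul_le_mul_of_nonneg_right (hN i (Finset.mem_Ico.1 hi).1).1 (by positivity)
      _ ≤ ∑ i ∈ Finset.Icc 1 n, B * (i : ℝ)⁻¹ :=
          Finset.sum_le_sum_of_subset_of_nonneg
            (fun i hi => Finset.mem_Icc.2
              ⟨hN1.trans (Finset.mem_Ico.1 hi).1, (Finset.mem_Ico.1 hi).2.le⟩)
            fun i _ _ => by positivity
      _ = B * harmonic n := by rw [← Finset.mul_sum, harmonic_eq_sum_Icc]; push_cast; rfl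
      _ ≤ B * (1 + log n) := mul_le_mul_of_nonneg_left (harmonic_le_one_add_log n) hB
  rw [← Finset.sum_Ico_consecutive _ hN1 hn]
  linarith

lemma le_of_frequently_mul_log_le {A B C : ℝ}
    (h : ∃ᶠ n : ℕ in atTop, A * log n ≤ C + B * log n) : A ≤ B := by
  by_contra! hlt
  have ht : Tendsto (fun n : ℕ => (A - B) * log n) atTop atTop :=
    (tendsto_log_atTop.comp tendsto_natCast_atTop_atTop).const_mul_atTop (sub_pos.2 hlt)
  obtain ⟨n, hle, hgt⟩ := (h.and_eventually (ht.eventually_gt_atTop C)).exists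
  linarith

end RealSequences

/-- The partial sums `Σ_n = ∑_{i<n} u i` grow with exponent at least one, that is,
`limsup log Σ_n / log n ≥ 1`. Comparing with the powers `n ^ a`, `a < 1`, avoids the junk value of
a real `limsup` and the quotient by `log 1 = 0`. -/
def PartialSumsAlmostLinear (u : ℕ → ℝ) : Prop :=
  ∀ a < (1 : ℝ), ∃ᶠ n : ℕ in atTop, (n : ℝ) ^ a ≤ ∑ i ∈ Finset.range n, u i

lemma not_partialSumsAlmostLinear {u : ℕ → ℝ} :
    ¬ PartialSumsAlmostLinear u ↔
      ∃ a < (1 : ℝ), ∀ᶠ n : ℕ in atTop, ∑ i ∈ Finset.range n, u i < (n : ℝ) ^ a := by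
  simp only [PartialSumsAlmostLinear, not_forall, not_frequently, not_le, exists_prop]

/-- A sequence of increasing functions `g n : s → (0, 1]` with derivatives `g' n` satisfying
`g_n' ≥ α n g_n / Σ_n`, where `Σ_n = ∑_{i<n} g_i`. -/
structure PartialSumDiffIneq (α : ℝ) (s : Set ℝ) (g g' : ℕ → ℝ → ℝ) : Prop where
  pos : ∀ n, ∀ z ∈ s, 0 < g n z
  le_one : ∀ n, ∀ z ∈ s, g n z ≤ 1
  monotoneOn : ∀ n, MonotoneOn (g n) s
  hasDerivWithinAt : ∀ n, ∀ z ∈ s, HasDerivWithinAt (g n) (g' n z) s z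
  le_deriv : ∀ n : ℕ, 1 ≤ n → ∀ z ∈ s,
    α * (n / ∑ i ∈ Finset.range n, g i z) * g n z ≤ g' n z

namespace PartialSumDiffIneq

variable {α : ℝ} {s : Set ℝ} {g g' : ℕ → ℝ → ℝ} {x y z : ℝ}

lemma sum_pos (h : PartialSumDiffIneq α s g g') (hz : z ∈ s) {n : ℕ} (hn : 1 ≤ n) :
    0 < ∑ i ∈ Finset.range n, g i z :=
  Finset.sum_pos (fun i _ => h.pos i z hz) ⟨0, Finset.mem_range.2 hn⟩

lemma sum_mono (h : PartialSumDiffIneq α s g g') (hx : x ∈ s) (hy : y ∈ s) (hxy : x ≤ y) (n : ℕ) :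
    ∑ i ∈ Finset.range n, g i x ≤ ∑ i ∈ Finset.range n, g i y :=
  Finset.sum_le_sum fun i _ => h.monotoneOn i hx hy hxy

lemma le_exp_neg_div_sum (h : PartialSumDiffIneq α s g g') (hα : 0 ≤ α) (hs : s.OrdConnected)
    (hx : x ∈ s) (hy : y ∈ s) (hxy : x ≤ y) {n : ℕ} (hn : 1 ≤ n) :
    g n x ≤ exp (-(α * (y - x) * (n / ∑ i ∈ Finset.range n, g i y))) := by
  have hsub : Set.Icc x y ⊆ s := hs.out hx hy
  have hrate : ∀ z ∈ Set.Icc x y, α * (n / ∑ i ∈ Finset.range n, g i y) * g n z ≤ g' n z := by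
    intro z hz
    have hsum := h.sum_mono (hsub hz) hy hz.2 n
    have hsum_pos := h.sum_pos (hsub hz) hn
    have hg := h.pos n z (hsub hz)
    calc α * (n / ∑ i ∈ Finset.range n, g i y) * g n z
        ≤ α * (n / ∑ i ∈ Finset.range n, g i z) * g n z := by gcongr
      _ ≤ g' n z := h.le_deriv n hn z (hsub hz)
  calc g n x
      ≤ exp (-(α * (n / ∑ i ∈ Finset.range n, g i y) * (y - x))) * g n y :=
        le_exp_neg_mul_mul_of_mul_le_hasDerivWithinAt
          (fun z hz => (h.hasDerivWithinAt n z (hsub hz)).mono hsub) hrate hxy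
    _ ≤ exp (-(α * (n / ∑ i ∈ Finset.range n, g i y) * (y - x))) :=
        mul_le_of_le_one_right (exp_pos _).le (h.le_one n y hy)
    _ = exp (-(α * (y - x) * (n / ∑ i ∈ Finset.range n, g i y))) := by rw [mul_right_comm]

lemma summable_of_eventually_sum_lt_rpow (h : PartialSumDiffIneq α s g g') (hα : 0 < α)
    (hs : s.OrdConnected) (hx : x ∈ s) (hy : y ∈ s) (hxy : x < y) {a : ℝ} (ha : a < 1)
    (hsum : ∀ᶠ n : ℕ in atTop, ∑ i ∈ Finset.range n, g i y < (n : ℝ) ^ a) :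
    Summable (fun n => g n x) := by
  have hc : 0 < α * (y - x) := mul_pos hα (sub_pos.2 hxy)
  refine .of_norm_bounded_eventually_nat
    (summable_exp_neg_mul_natCast_rpow hc (sub_pos.2 ha)) ?_
  filter_upwards [hsum, eventually_ge_atTop 1] with n hlt hn
  have hn_pos : (0 : ℝ) < n := by exact_mod_cast hn
  have hsum_pos := h.sum_pos hy hn
  have hpow : (n : ℝ) ^ (1 - a) ≤ n / ∑ i ∈ Finset.range n, g i y := by
    rw [rpow_sub hn_pos, rpow_one]
    gcongr
  calc ‖g n x‖ = g n x := norm_of_nonneg (h.pos n x hx).le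
    _ ≤ exp (-(α * (y - x) * (n / ∑ i ∈ Finset.range n, g i y))) :=
        h.le_exp_neg_div_sum hα.le hs hx hy hxy.le hn
    _ ≤ exp (-(α * (y - x)) * (n : ℝ) ^ (1 - a)) := by
        rw [neg_mul]
        gcongr

lemma exists_le_exp_neg_mul_of_summable (h : PartialSumDiffIneq α s g g') (hα : 0 < α)
    (hs : s.OrdConnected) (hx : x ∈ s) (hy : y ∈ s) (hxy : x < y)
    (hsum : Summable (fun n => g n y)) :
    ∃ c > (0 : ℝ), ∀ n : ℕ, g n x ≤ exp (-c * n) := by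
  have hnonneg : ∀ n, 0 ≤ g n y := fun n => (h.pos n y hy).le
  have htsum : 0 < ∑' n, g n y := hsum.tsum_pos hnonneg 0 (h.pos 0 y hy)
  have hc : 0 < α * (y - x) := mul_pos hα (sub_pos.2 hxy)
  refine ⟨α * (y - x) / ∑' n, g n y, div_pos hc htsum, fun n => ?_⟩
  rcases n.eq_zero_or_pos with rfl | hn
  · simpa using h.le_one 0 x hx
  have hsum_pos := h.sum_pos hy hn
  calc g n x
      ≤ exp (-(α * (y - x) * (n / ∑ i ∈ Finset.range n, g i y))) :=
        h.le_exp_neg_div_sum hα.le hs hx hy hxy.le hn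
    _ ≤ exp (-(α * (y - x) * (n / ∑' n, g n y))) := by
        gcongr
        exact hsum.sum_le_tsum _ fun i _ => hnonneg i
    _ = exp (-(α * (y - x) / ∑' n, g n y) * n) := by
        congr 1
        ring

lemma exists_le_exp_neg_mul_of_not_almostLinear (h : PartialSumDiffIneq α s g g') (hα : 0 < α)
    (hs : s.OrdConnected) (hx : x ∈ s) (hy : y ∈ s) (hxy : x < y)
    (hlin : ¬ PartialSumsAlmostLinear (fun n => g n y)) :
    ∃ c > (0 : ℝ), ∀ n : ℕ, g n x ≤ exp (-c * n) := by
  obtain ⟨a, ha, hsum⟩ := not_partialSumsAlmostLinear.1 hlin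
  obtain ⟨w, hxw, hwy⟩ := exists_between hxy
  have hw : w ∈ s := hs.out hx hy ⟨hxw.le, hwy.le⟩
  exact h.exists_le_exp_neg_mul_of_summable hα hs hx hw hxw
    (h.summable_of_eventually_sum_lt_rpow hα hs hw hy hwy ha hsum)

lemma mul_log_sum_le_sum_deriv_div (h : PartialSumDiffIneq α s g g') (hα : 0 ≤ α) (hz : z ∈ s)
    {n : ℕ} (hn : 1 ≤ n) :
    α * log (∑ i ∈ Finset.range n, g i z) ≤ ∑ i ∈ Finset.Ico 1 n, g' i z / i := by
  have hlog : log (∑ i ∈ Finset.range n, g i z) ≤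
      ∑ i ∈ Finset.Ico 1 n, g i z / ∑ j ∈ Finset.range i, g j z := by
    have hfirst : log (g 0 z) ≤ 0 := log_nonpos (h.pos 0 z hz).le (h.le_one 0 z hz)
    have := log_sum_range_le_log_add_sum_div (fun i => h.pos i z hz) hn
    linarith
  calc α * log (∑ i ∈ Finset.range n, g i z)
      ≤ α * ∑ i ∈ Finset.Ico 1 n, g i z / ∑ j ∈ Finset.range i, g j z :=
        mul_le_mul_of_nonneg_left hlog hα
    _ = ∑ i ∈ Finset.Ico 1 n, α * (g i z / ∑ j ∈ Finset.range i, g j z) := Finset.mul_sum ..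
    _ ≤ ∑ i ∈ Finset.Ico 1 n, g' i z / i := by
        refine Finset.sum_le_sum fun i hi => ?_
        have hi1 : 1 ≤ i := (Finset.mem_Ico.1 hi).1
        have hi_pos : (0 : ℝ) < i := by exact_mod_cast hi1
        rw [le_div_iff₀ hi_pos]
        refine le_of_eq_of_le ?_ (h.le_deriv i hi1 z hz)
        ring

lemma mul_log_sum_le_sum_div (h : PartialSumDiffIneq α s g g') (hα : 0 ≤ α)
    (hs : s.OrdConnected) (hx : x ∈ s) (hy : y ∈ s) (hxy : x ≤ y) {n : ℕ} (hn : 1 ≤ n) :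
    α * (y - x) * log (∑ i ∈ Finset.range n, g i x) ≤ ∑ i ∈ Finset.Ico 1 n, g i y / i := by
  have hsub : Set.Icc x y ⊆ s := hs.out hx hy
  have hrate : ∀ z ∈ Set.Icc x y,
      α * log (∑ i ∈ Finset.range n, g i x) ≤ ∑ i ∈ Finset.Ico 1 n, g' i z / i := fun z hz =>
    calc α * log (∑ i ∈ Finset.range n, g i x)
        ≤ α * log (∑ i ∈ Finset.range n, g i z) := mul_le_mul_of_nonneg_left
          (log_le_log (h.sum_pos hx hn) (h.sum_mono hx (hsub hz) hz.1 n)) hα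
      _ ≤ ∑ i ∈ Finset.Ico 1 n, g' i z / i := h.mul_log_sum_le_sum_deriv_div hα (hsub hz) hn
  have hincr := mul_sub_le_sub_of_le_hasDerivWithinAt
    (f := fun z => ∑ i ∈ Finset.Ico 1 n, g i z / i)
    (fun z hz => HasDerivWithinAt.fun_sum fun i _ =>
      ((h.hasDerivWithinAt i z (hsub hz)).mono hsub).div_const _) hrate hxy
  have hnonneg : 0 ≤ ∑ i ∈ Finset.Ico 1 n, g i x / i :=
    Finset.sum_nonneg fun i _ => div_nonneg (h.pos i x hx).le i.cast_nonneg
  linarith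

lemma mul_sub_le_of_eventually_le (h : PartialSumDiffIneq α s g g') (hα : 0 ≤ α)
    (hs : s.OrdConnected) (hx : x ∈ s) (hy : y ∈ s) (hxy : x ≤ y)
    (hlin : PartialSumsAlmostLinear (fun n => g n x)) {B : ℝ} (hB : ∀ᶠ n in atTop, g n y ≤ B) :
    α * (y - x) ≤ B := by
  have hK : 0 ≤ α * (y - x) := mul_nonneg hα (sub_nonneg.2 hxy)
  have hB0 : 0 ≤ B := by
    obtain ⟨n, hn⟩ := hB.exists
    exact (h.pos n y hy).le.trans hn
  obtain ⟨C, hC⟩ := exists_eventually_sum_div_le_add_mul_log hB0 hB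
  have hscaled : ∀ a < (1 : ℝ), α * (y - x) * a ≤ B := by
    intro a ha
    refine le_of_frequently_mul_log_le (C := C) ?_
    refine ((hlin a ha).and_eventually (hC.and (eventually_ge_atTop 1))).mono ?_
    rintro n ⟨hpow, hupper, hn⟩
    have hn_pos : (0 : ℝ) < n := by exact_mod_cast hn
    have hlog : a * log n ≤ log (∑ i ∈ Finset.range n, g i x) := by
      rw [← log_rpow hn_pos]
      exact log_le_log (rpow_pos_of_pos hn_pos a) hpow
    calc α * (y - x) * a * log n
        = α * (y - x) * (a * log n) := mul_assoc ..
      _ ≤ α * (y - x) * log (∑ i ∈ Finset.range n, g i x) := mul_le_mul_of_nonneg_left hlog hK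
      _ ≤ ∑ i ∈ Finset.Ico 1 n, g i y / i := h.mul_log_sum_le_sum_div hα hs hx hy hxy hn
      _ ≤ C + B * log n := hupper
  have hlim : Tendsto (fun a => α * (y - x) * a) (nhdsWithin 1 (Set.Iio 1))
      (nhds (α * (y - x) * 1)) := (continuous_const_mul _).continuousWithinAt
  simpa using le_of_tendsto hlim (eventually_mem_nhdsWithin.mono hscaled)

lemma isBoundedUnder (h : PartialSumDiffIneq α s g g') (hz : z ∈ s) :
    IsBoundedUnder (· ≤ ·) atTop (fun n => g n z) :=
  isBoundedUnder_of ⟨1, fun n => h.le_one n z hz⟩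

lemma limsup_nonneg (h : PartialSumDiffIneq α s g g') (hz : z ∈ s) :
    0 ≤ limsup (fun n => g n z) atTop :=
  le_limsup_of_frequently_le (.of_forall fun n => (h.pos n z hz).le) (h.isBoundedUnder hz)

lemma mul_sub_le_limsup (h : PartialSumDiffIneq α s g g') (hα : 0 ≤ α)
    (hs : s.OrdConnected) (hx : x ∈ s) (hy : y ∈ s)
    (hlin : PartialSumsAlmostLinear (fun n => g n x)) :
    α * (y - x) ≤ limsup (fun n => g n y) atTop := by
  rcases le_total x y with hxy | hyx
  · refine le_of_forall_gt_imp_ge_of_dense fun B hB => ?_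
    exact h.mul_sub_le_of_eventually_le hα hs hx hy hxy hlin
      ((eventually_lt_of_limsup_lt hB (h.isBoundedUnder hy)).mono fun n => le_of_lt)
  · exact (mul_nonpos_of_nonneg_of_nonpos hα (sub_nonpos.2 hyx)).trans (h.limsup_nonneg hy)

end PartialSumDiffIneq

/-- The threshold `z̃` of the family `g` on `s`: the infimum of the points at which the partial sums
of `g` grow almost linearly. Adjoining `sSup s` puts it at the right end when there is no such
point, and keeps `sInf` away from the empty set. -/
noncomputable def criticalPoint (s : Set ℝ) (g : ℕ → ℝ → ℝ) : ℝ :=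
  sInf (insert (sSup s) {z ∈ s | PartialSumsAlmostLinear fun n => g n z})

section CriticalPoint

variable {s : Set ℝ} {g : ℕ → ℝ → ℝ} {z : ℝ}

lemma criticalPoint_le_sSup (hbelow : BddBelow s) : criticalPoint s g ≤ sSup s :=
  csInf_le ((hbelow.mono (Set.sep_subset _ _)).insert _) (Set.mem_insert _ _)

lemma criticalPoint_le (hbelow : BddBelow s) (hz : z ∈ s)
    (hlin : PartialSumsAlmostLinear fun n => g n z) : criticalPoint s g ≤ z :=
  csInf_le ((hbelow.mono (Set.sep_subset _ _)).insert _) (Set.mem_insert_of_mem _ ⟨hz, hlin⟩)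

lemma le_criticalPoint (hsup : z ≤ sSup s)
    (hlin : ∀ w ∈ s, PartialSumsAlmostLinear (fun n => g n w) → z ≤ w) : z ≤ criticalPoint s g := by
  refine le_csInf (Set.insert_nonempty _ _) ?_
  rintro w (rfl | ⟨hw, hw_lin⟩)
  exacts [hsup, hlin w hw hw_lin]

lemma exists_gt_not_almostLinear_of_lt_criticalPoint (hs : s.OrdConnected) (hbelow : BddBelow s)
    (hz : z ∈ s) (hlt : z < criticalPoint s g) :
    ∃ y ∈ s, z < y ∧ ¬ PartialSumsAlmostLinear (fun n => g n y) := by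
  obtain ⟨y, hzy, hy⟩ := exists_between hlt
  obtain ⟨t, ht, hyt⟩ := exists_lt_of_lt_csSup ⟨z, hz⟩ (hy.trans_le (criticalPoint_le_sSup hbelow))
  have hys : y ∈ s := hs.out hz ht ⟨hzy.le, hyt.le⟩
  exact ⟨y, hys, hzy, fun hlin => (criticalPoint_le hbelow hys hlin).not_gt hy⟩

end CriticalPoint

theorem sharp_threshold_from_differential_inequality_general {α : ℝ} {s : Set ℝ}
    {g g' : ℕ → ℝ → ℝ} (hα : 0 < α) (hs : s.OrdConnected) (hne : s.Nonempty)
    (hbelow : BddBelow s) (habove : BddAbove s) (h : PartialSumDiffIneq α s g g') :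
    ∃ zt ∈ Set.Icc (sInf s) (sSup s),
      (∀ z ∈ s, z < zt → ∃ c > (0 : ℝ), ∀ n : ℕ, g n z ≤ exp (-c * n)) ∧
      (∀ z ∈ s, α * (z - zt) ≤ limsup (fun n => g n z) atTop) := by
  refine ⟨criticalPoint s g, ⟨?_, criticalPoint_le_sSup hbelow⟩, fun z hz hlt => ?_, fun z hz => ?_⟩
  · exact le_criticalPoint (csInf_le_csSup hne hbelow habove) fun w hw _ => csInf_le hbelow hw
  · obtain ⟨y, hy, hzy, hlin⟩ := exists_gt_not_almostLinear_of_lt_criticalPoint hs hbelow hz hlt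
    exact h.exists_le_exp_neg_mul_of_not_almostLinear hα hs hz hy hzy hlin
  · have hle : z - limsup (fun n => g n z) atTop / α ≤ criticalPoint s g := by
      refine le_criticalPoint ?_ fun w hw hlin => ?_
      · have := div_nonneg (h.limsup_nonneg hz) hα.le
        linarith [le_csSup habove hz]
      · rw [sub_le_comm, le_div_iff₀' hα]
        exact h.mul_sub_le_limsup hα.le hs hw hz hlin
    rwa [sub_le_comm, le_div_iff₀' hα] at hle

/-- Differential-inequality lemma (Lemma 5.3): a sequence of increasing differentiable
functions `g n : (0, zmax] → (0,1]` satisfying `g_n'(z) ≥ α₂ n g_n(z) / Σ_n(z)` with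
`Σ_n(z) = ∑_{i<n} g_i(z)` admits a threshold `z̃ ∈ [0, zmax]` with exponential decay
below it and a linear lower bound on the limit above it. -/
theorem sharp_threshold_from_differential_inequality
    (zmax α₂ : ℝ) (hzmax : 0 < zmax) (hα₂ : 0 < α₂)
    (g g' : ℕ → ℝ → ℝ)
    (hrange : ∀ n, ∀ z ∈ Set.Ioc 0 zmax, g n z ∈ Set.Ioc (0 : ℝ) 1)
    (hmono : ∀ n, MonotoneOn (g n) (Set.Ioc 0 zmax))
    (hdiff : ∀ n, ∀ z ∈ Set.Ioc 0 zmax,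
      HasDerivWithinAt (g n) (g' n z) (Set.Ioc 0 zmax) z)
    (hconv : ∀ z ∈ Set.Ioc 0 zmax, ∃ L : ℝ, Tendsto (fun n => g n z) atTop (nhds L))
    (hineq : ∀ n : ℕ, 1 ≤ n → ∀ z ∈ Set.Ioc 0 zmax,
      α₂ * (n / (∑ i ∈ Finset.range n, g i z)) * g n z ≤ g' n z) :
    ∃ zt ∈ Set.Icc (0 : ℝ) zmax,
      (∀ z ∈ Set.Ioc 0 zmax, z < zt →
        ∃ α₁ > (0 : ℝ), ∀ n : ℕ, g n z ≤ Real.exp (-α₁ * n)) ∧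
      (∀ z ∈ Set.Ioc 0 zmax, zt < z →
        ∀ L : ℝ, Tendsto (fun n => g n z) atTop (nhds L) → α₂ * (z - zt) ≤ L) := by
  obtain ⟨zt, hzt, hbelow, habove⟩ := sharp_threshold_from_differential_inequality_general hα₂
    Set.ordConnected_Ioc ⟨zmax, Set.right_mem_Ioc.2 hzmax⟩ bddBelow_Ioc bddAbove_Ioc
    ⟨fun n z hz => (hrange n z hz).1, fun n z hz => (hrange n z hz).2, hmono, hdiff, hineq⟩
  rw [csInf_Ioc hzmax, csSup_Ioc hzmax] at hzt
  exact ⟨zt, hzt, hbelow, fun z hz _ L hL => hL.limsup_eq ▸ habove z hz⟩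
end

section
/- Let $d \ge 1$, let $v_d$ denote the Lebesgue measure of the closed unit ball in $\mathbb{R}^d$, let $M > 1$, and set $c = \min\left(1, \frac{e^{-(M+1) v_d}}{v_d\, M}\right)$. Then $c > 0$, and for every $z, \beta \in [0, M]$, every $u \in [0,1]$, every point $x \in \mathbb{R}^d$, and all countable subsets $s \subseteq s' \subseteq \mathbb{R}^d$, the following two inequalities hold: (i) $\gamma_{z,\beta}(x, s') \ge \gamma_{z,\beta+u}(x, s)$, i.e. $z\, \exp\big(-\beta\, \lambda\big(B_1(x) \setminus B_1(s')\big)\big) \ge z\, \exp\big(-(\beta+u)\, \lambda\big(B_1(x) \setminus B_1(s)\big)\big)$; and (ii) $\gamma_{z+u,\beta+cu}(x, s') \ge \gamma_{z,\beta}(x, s)$, i.e. $(z+u)\, \exp\big(-(\beta+cu)\, \lambda\big(B_1(x) \setminus B_1(s')\big)\big) \ge z\, \exp\big(-\beta\, \lambda\big(B_1(x) \setminus B_1(s)\big)\big)$. -/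
open MeasureTheory Real

/-!
The intensity increases with the configuration, because a larger union of grains leaves less of the
new grain uncovered, and it decreases with the inverse temperature; together these give (i). For
(ii), monotonicity in the configuration leaves a comparison at a single configuration. With
`t = c u a`, where `a` is the uncovered measure, it reads `z ≤ (z + u) exp (-t)`. By
`1 - t ≤ exp (-t)`, it suffices that `z t ≤ u exp (-t)`, and the choice of `c` ensures this through
`z t ≤ M c u v ≤ u exp (-v)` and `t ≤ v`.
-/

lemma le_add_mul_exp_neg {z u t : ℝ} (hz : 0 ≤ z) (h : z * t ≤ u * exp (-t)) :
    z ≤ (z + u) * exp (-t) :=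
  calc
    z = z * (1 - t) + z * t := by ring
    _ ≤ z * exp (-t) + u * exp (-t) := by
      gcongr
      exact one_sub_le_exp_neg t
    _ = (z + u) * exp (-t) := by ring

section AreaInteraction

variable {ι X : Type*} [MeasurableSpace X] {μ : Measure X} {K : ι → Set X} {x : ι} {s : Set ι}

/-- The measure of the part of the grain `K x` not covered by the grains at the points of `s`. For
`μ = λ` and `K y = B₁(y)` this is `λ(B₁(x) \ B₁(s))`. The value is `0` if the measure of
this part is infinite. -/
noncomputable def uncoveredMeasure (μ : Measure X) (K : ι → Set X) (x : ι) (s : Set ι) : ℝ :=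
  μ.real (K x \ ⋃ y ∈ s, K y)

lemma uncoveredMeasure_nonneg : 0 ≤ uncoveredMeasure μ K x s :=
  measureReal_nonneg

lemma uncoveredMeasure_le (hK : μ (K x) ≠ ⊤) : uncoveredMeasure μ K x s ≤ μ.real (K x) :=
  measureReal_mono Set.sdiff_subset hK

lemma uncoveredMeasure_antitone (hK : μ (K x) ≠ ⊤) : Antitone (uncoveredMeasure μ K x) :=
  fun _ _ hs ↦ measureReal_mono
    (Set.sdiff_subset_sdiff_right (Set.biUnion_subset_biUnion_left hs))
    (measure_ne_top_of_subset Set.sdiff_subset hK)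

/-- The Papangelou intensity of the area-interaction model with activity `z`, inverse temperature
`β` and grain `K y` at each point `y`: the density of adding the point `x` to the configuration `s`.
The intensity `γ_{z,β}` of the paper is the case `μ = λ`, `K y = B₁(y)`. -/
noncomputable def papangelouIntensity (μ : Measure X) (K : ι → Set X) (z β : ℝ) (x : ι)
    (s : Set ι) : ℝ :=
  z * exp (-β * uncoveredMeasure μ K x s)

lemma papangelouIntensity_monotone {z β : ℝ} (hK : μ (K x) ≠ ⊤) (hz : 0 ≤ z) (hβ : 0 ≤ β) :
    Monotone (papangelouIntensity μ K z β x) := by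
  intro s s' hs
  have huncovered := uncoveredMeasure_antitone hK hs
  simp only [papangelouIntensity, neg_mul]
  gcongr

lemma papangelouIntensity_antitone_inverseTemperature {z : ℝ} (hz : 0 ≤ z) :
    Antitone fun β ↦ papangelouIntensity μ K z β x s := by
  intro β β' hβ
  have hnonneg : 0 ≤ uncoveredMeasure μ K x s := uncoveredMeasure_nonneg
  simp only [papangelouIntensity]
  gcongr

lemma papangelouIntensity_add_inverseTemperature (z β δ : ℝ) :
    papangelouIntensity μ K z (β + δ) x s =
      papangelouIntensity μ K (z * exp (-(δ * uncoveredMeasure μ K x s))) β x s := by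
  simp only [papangelouIntensity]
  rw [mul_assoc, ← exp_add]
  ring_nf

lemma papangelouIntensity_le_add_add {M v c z β u : ℝ} (hfin : μ (K x) ≠ ⊤)
    (hKv : μ.real (K x) ≤ v) (hc₀ : 0 ≤ c) (hc₁ : c ≤ 1) (hcM : c * (v * M) ≤ exp (-v))
    (hz : z ∈ Set.Icc 0 M) (hu : u ∈ Set.Icc 0 1) :
    papangelouIntensity μ K z β x s ≤ papangelouIntensity μ K (z + u) (β + c * u) x s := by
  obtain ⟨hz₀, hzM⟩ := hz
  obtain ⟨hu₀, hu₁⟩ := hu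
  rw [papangelouIntensity_add_inverseTemperature]
  set a := uncoveredMeasure μ K x s
  have ha₀ : 0 ≤ a := uncoveredMeasure_nonneg
  have hav : a ≤ v := (uncoveredMeasure_le hfin).trans hKv
  have htv : c * u * a ≤ v := (mul_le_of_le_one_left ha₀ (mul_le_one₀ hc₁ hu₀ hu₁)).trans hav
  have hloss : z * (c * u * a) ≤ u * exp (-(c * u * a)) :=
    calc
      z * (c * u * a) ≤ M * (c * u * v) := by
        have hM : 0 ≤ M := hz₀.trans hzM
        gcongr
      _ = u * (c * (v * M)) := by ring
      _ ≤ u * exp (-v) := by gcongr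
      _ ≤ u * exp (-(c * u * a)) := by gcongr
  exact mul_le_mul_of_nonneg_right (le_add_mul_exp_neg hz₀ hloss) (exp_nonneg _)

theorem papangelou_intensity_monotonicity_general {M v c : ℝ} (hM : 0 < M) (hv : 0 < v)
    (hfin : ∀ x, μ (K x) ≠ ⊤) (hKv : ∀ x, μ.real (K x) ≤ v)
    (hc : c = min 1 (exp (-(M + 1) * v) / (v * M))) :
    0 < c ∧
    ∀ z ∈ Set.Icc 0 M, ∀ β, 0 ≤ β → ∀ u ∈ Set.Icc (0 : ℝ) 1, ∀ x, ∀ s s' : Set ι, s ⊆ s' →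
      papangelouIntensity μ K z (β + u) x s ≤ papangelouIntensity μ K z β x s' ∧
      papangelouIntensity μ K z β x s ≤ papangelouIntensity μ K (z + u) (β + c * u) x s' := by
  have hc₀ : 0 < c := by
    rw [hc]
    positivity
  have hc₁ : c ≤ 1 := hc ▸ min_le_left _ _
  have hcM : c * (v * M) ≤ exp (-v) :=
    calc
      c * (v * M) ≤ exp (-(M + 1) * v) :=
        (le_div_iff₀ (by positivity)).mp (hc ▸ min_le_right _ _)
      _ ≤ exp (-v) := exp_le_exp.mpr (by linarith [mul_pos hM hv])
  refine ⟨hc₀, fun z hz β hβ u hu x s s' hs ↦ ?_⟩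
  have hmono : papangelouIntensity μ K z β x s ≤ papangelouIntensity μ K z β x s' :=
    papangelouIntensity_monotone (hfin x) hz.1 hβ hs
  exact ⟨(papangelouIntensity_antitone_inverseTemperature hz.1
      (le_add_of_nonneg_right hu.1)).trans hmono,
    hmono.trans (papangelouIntensity_le_add_add (hfin x) (hKv x) hc₀.le hc₁ hcM hz hu)⟩

end AreaInteraction

/-- Monotonicity inequalities for the Papangelou intensity
`γ_{z,β}(x, s) = z exp(-β λ(B₁(x) \ B₁(s)))` of the area-interaction model
(Section 4.4.2 of the paper): with `c = min(1, e^{-(M+1)v_d}/(v_d M))` one has `c > 0`,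
and for `z, β ∈ [0,M]`, `u ∈ [0,1]`, `x ∈ ℝ^d` and countable `s ⊆ s'`,
`γ_{z,β}(x,s') ≥ γ_{z,β+u}(x,s)` and `γ_{z+u,β+cu}(x,s') ≥ γ_{z,β}(x,s)`. -/
theorem papangelou_intensity_monotonicity
    (d : ℕ) (hd : 1 ≤ d) (M : ℝ) (hM : 1 < M)
    (vd : ℝ)
    (hvd : vd = (volume (Metric.closedBall (0 : EuclideanSpace ℝ (Fin d)) 1)).toReal)
    (c : ℝ) (hc : c = min 1 (Real.exp (-(M + 1) * vd) / (vd * M))) :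
    0 < c ∧
    ∀ z ∈ Set.Icc (0 : ℝ) M, ∀ β ∈ Set.Icc (0 : ℝ) M, ∀ u ∈ Set.Icc (0 : ℝ) 1,
      ∀ x : EuclideanSpace ℝ (Fin d), ∀ s s' : Set (EuclideanSpace ℝ (Fin d)),
        s.Countable → s'.Countable → s ⊆ s' →
        (z * Real.exp (-β *
            (volume (Metric.closedBall x 1 \ ⋃ y ∈ s', Metric.closedBall y 1)).toReal) ≥
          z * Real.exp (-(β + u) *
            (volume (Metric.closedBall x 1 \ ⋃ y ∈ s, Metric.closedBall y 1)).toReal)) ∧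
        ((z + u) * Real.exp (-(β + c * u) *
            (volume (Metric.closedBall x 1 \ ⋃ y ∈ s', Metric.closedBall y 1)).toReal) ≥
          z * Real.exp (-β *
            (volume (Metric.closedBall x 1 \ ⋃ y ∈ s, Metric.closedBall y 1)).toReal)) := by
  have hv : 0 < vd := hvd ▸ ENNReal.toReal_pos
    (Metric.measure_closedBall_pos _ _ one_pos).ne' measure_closedBall_lt_top.ne
  have hball (x : EuclideanSpace ℝ (Fin d)) : volume.real (Metric.closedBall x 1) = vd :=
    hvd ▸ Measure.addHaar_real_closedBall_center volume x 1
  obtain ⟨hc₀, hmono⟩ := papangelou_intensity_monotonicity_general (zero_lt_one.trans hM) hv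
    (fun _ ↦ measure_closedBall_lt_top.ne) (fun x ↦ (hball x).le) hc
  exact ⟨hc₀, fun z hz β hβ u hu x s s' _ _ hs ↦ hmono z hz β hβ.1 u hu x s s' hs⟩
end
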